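/- Let A = !![8, 3; -3, -1] be the 2×2 integer matrix with rows (8, 3) and (−3, −1). For every natural number k ≥ 1, the quotient additive group (Fin 2 → ℤ) ⧸ range(toLin'(A^k − 1)) is finite, and its cardinality equals the natural absolute value |det(A^k − 1)|. Consequently, for positive natural numbers k < l, the quotients (Fin 2 → ℤ) ⧸ range(toLin'(A^k − 1)) and (Fin 2 → ℤ) ⧸ range(toLin'(A^l − 1)) are not isomorphic as additive groups. -/

import Mathlib

lemma aux_pow (k : ℕ) : ∃ u v : ℤ,
    (!![8, 3; -3, -1] : Matrix (Fin 2) (Fin 2) ℤ) ^ (k + 1) = !![8*u - v, 3*u; -3*u, -u - v] ∧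
    v < u ∧ 0 ≤ v ∧ u^2 - 7*u*v + v^2 = 1 := by
  induction k with
  | zero => exact ⟨1, 0, by simp, by norm_num, by norm_num, by norm_num⟩
  | succ k ih =>
    obtain ⟨u, v, h, h1, h2, h3⟩ := ih
    refine ⟨7*u - v, u, ?_, by linarith, by linarith, by linarith⟩
    rw [pow_succ, h, Matrix.mul_fin_two]
    congr 1
    ext i j
    fin_cases i <;> fin_cases j <;> simp <;> ring

lemma aux_det (u v : ℤ) (h : u^2 - 7*u*v + v^2 = 1) :
    ((!![8*u - v, 3*u; -3*u, -u - v] : Matrix (Fin 2) (Fin 2) ℤ) - 1).det = 2 - (7*u - 2*v) := by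
  rw [Matrix.det_fin_two]
  simp
  linarith

lemma aux_step (k : ℕ) :
    (((!![8, 3; -3, -1] : Matrix (Fin 2) (Fin 2) ℤ) ^ (k + 1) - 1).det).natAbs <
    (((!![8, 3; -3, -1] : Matrix (Fin 2) (Fin 2) ℤ) ^ (k + 1 + 1) - 1).det).natAbs := by
  obtain ⟨u, v, h, h1, h2, h3⟩ := aux_pow k
  have h' : (!![8, 3; -3, -1] : Matrix (Fin 2) (Fin 2) ℤ) ^ (k + 1 + 1)
      = !![8*(7*u-v) - u, 3*(7*u-v); -3*(7*u-v), -(7*u-v) - u] := by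
    rw [pow_succ, h, Matrix.mul_fin_two]
    ext i j
    fin_cases i <;> fin_cases j <;> simp <;> ring
  rw [h', h, aux_det u v h3, aux_det (7*u-v) u (by linarith)]
  omega

lemma aux_ne (k : ℕ) :
    ((!![8, 3; -3, -1] : Matrix (Fin 2) (Fin 2) ℤ) ^ (k + 1) - 1).det ≠ 0 := by
  obtain ⟨u, v, h, h1, h2, h3⟩ := aux_pow k
  rw [h, aux_det u v h3]
  omega

lemma aux_card (B : Matrix (Fin 2) (Fin 2) ℤ) (hB : B.det ≠ 0) :
    Nat.card ((Fin 2 → ℤ) ⧸ LinearMap.range (Matrix.toLin' B)) = B.det.natAbs := by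
  have hinj : Function.Injective (Matrix.toLin' B) := by
    rw [← LinearMap.ker_eq_bot, LinearMap.ker_eq_bot']
    intro m hm
    exact Matrix.eq_zero_of_mulVec_eq_zero hB (by simpa using hm)
  have := Submodule.natAbs_det_equiv (LinearMap.range (Matrix.toLin' B))
    (LinearEquiv.ofInjective _ hinj)
  have h2 : (LinearMap.range (Matrix.toLin' B)).subtype ∘ₗ
      ((LinearEquiv.ofInjective _ hinj : _ ≃ₗ[ℤ] _) : (Fin 2 → ℤ) →ₗ[ℤ] _) = Matrix.toLin' B := by
    ext; simp
  have h3 : LinearMap.det (Matrix.toLin' B) = B.det := LinearMap.det_toLin' B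
  rw [← h3, ← h2]
  exact this.symm

/-- For `A = !![8, 3; -3, -1]` over `ℤ` and any `k ≥ 1`, the quotient of `Fin 2 → ℤ` by the
range of the linear map given by `A ^ k - 1` is finite of cardinality `|det (A ^ k - 1)|`;
consequently, for `0 < k < l` the corresponding quotients are not isomorphic as additive
groups. -/
theorem quotient_range_finite_card_and_not_iso :
    (∀ k : ℕ, 1 ≤ k →
      Finite ((Fin 2 → ℤ) ⧸
        LinearMap.range (Matrix.toLin'
          ((!![8, 3; -3, -1] : Matrix (Fin 2) (Fin 2) ℤ) ^ k - 1))) ∧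
      Nat.card ((Fin 2 → ℤ) ⧸
        LinearMap.range (Matrix.toLin'
          ((!![8, 3; -3, -1] : Matrix (Fin 2) (Fin 2) ℤ) ^ k - 1))) =
        (((!![8, 3; -3, -1] : Matrix (Fin 2) (Fin 2) ℤ) ^ k - 1).det).natAbs) ∧
    (∀ k l : ℕ, 0 < k → k < l →
      ¬ Nonempty
        (((Fin 2 → ℤ) ⧸
            LinearMap.range (Matrix.toLin'
              ((!![8, 3; -3, -1] : Matrix (Fin 2) (Fin 2) ℤ) ^ k - 1))) ≃+
          ((Fin 2 → ℤ) ⧸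
            LinearMap.range (Matrix.toLin'
              ((!![8, 3; -3, -1] : Matrix (Fin 2) (Fin 2) ℤ) ^ l - 1))))) := by
  have hcard : ∀ k : ℕ, 0 < k → _ := fun k hk => aux_card
    ((!![8, 3; -3, -1] : Matrix (Fin 2) (Fin 2) ℤ) ^ k - 1) (by
      obtain ⟨m, rfl⟩ := Nat.exists_eq_add_of_lt hk
      simpa using aux_ne m)
  refine ⟨fun k hk => ⟨?_, hcard k hk⟩, ?_⟩
  · apply Nat.finite_of_card_ne_zero
    rw [hcard k hk]
    obtain ⟨m, rfl⟩ := Nat.exists_eq_add_of_le' hk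
    exact Int.natAbs_ne_zero.mpr (aux_ne m)
  · rintro k l hk hkl ⟨e⟩
    have h := Nat.card_congr e.toEquiv
    rw [hcard k hk, hcard l (hk.trans hkl)] at h
    obtain ⟨m, rfl⟩ := Nat.exists_eq_add_of_le' (Nat.succ_le_of_lt hk)
    obtain ⟨n, rfl⟩ := Nat.exists_eq_add_of_le' (Nat.succ_le_of_lt (hk.trans hkl))
    have hm : StrictMono (fun k : ℕ =>
      (((!![8, 3; -3, -1] : Matrix (Fin 2) (Fin 2) ℤ) ^ (k + 1) - 1).det).natAbs) :=
      strictMono_nat_of_lt_succ aux_step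
    exact (hm (show m < n by omega)).ne h
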